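/- arXiv:1201.2335 — 5 statements merged into one kernel-verified Lean document; each statement's English description precedes it below -/
import Mathlib

section
/- Let W be a subspace of V that is invariant under a symplectic transvection T_u[λ] (u ∈ V nonzero, λ ∈ F_ℓ nonzero), i.e. T_u[λ](w) ∈ W for all w ∈ W. Then either u ∈ W or u ∈ W^⊥. -/
/-- if a subspace `W` is invariant under the symplectic transvection `T_u[c]`
(`u ≠ 0`, `c ≠ 0`), then either `u ∈ W` or `u ∈ W^⊥`. -/
theorem transvection_invariant_imp_direction_in_or_perp
    {ℓ : ℕ} [Fact (Nat.Prime ℓ)] (hℓ : 2 < ℓ)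
    {V : Type*} [AddCommGroup V] [Module (ZMod ℓ) V] [FiniteDimensional (ZMod ℓ) V]
    (e : V →ₗ[ZMod ℓ] V →ₗ[ZMod ℓ] ZMod ℓ)
    (halt : ∀ v : V, e v v = 0)
    (hnondeg : ∀ v : V, (∀ w : V, e v w = 0) → v = 0)
    (u : V) (hu : u ≠ 0) (c : ZMod ℓ) (hc : c ≠ 0)
    (W : Submodule (ZMod ℓ) V)
    (hW : ∀ w ∈ W, w + (c * e w u) • u ∈ W) :
    u ∈ W ∨ (∀ x ∈ W, e x u = 0) := by
  by_cases h : ∀ x ∈ W, e x u = 0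
  · exact Or.inr h
  · left
    push Not at h
    obtain ⟨x, hx, hxu⟩ := h
    have h1 : (c * e x u) • u ∈ W := (W.add_mem_iff_right hx).1 (hW x hx)
    exact (W.smul_mem_iff (mul_ne_zero hc hxu)).1 h1
end

section
/- The set L(M) ∩ W spans W; that is, W is generated as an F_ℓ-vector space by the direction vectors of transvections of M which lie in W. In particular L(M) ∩ W is nonempty. -/
/-- `T` is the symplectic transvection `T_u[c]` with respect to the bilinear form `e`,
i.e. `T v = v + c·e(v,u)·u` for all `v`, with direction vector `u ≠ 0` and parameter `c ≠ 0`. -/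
def IsTransvectionWith {k V : Type*} [Field k] [AddCommGroup V] [Module k V]
    (e : V →ₗ[k] V →ₗ[k] k) (T : V ≃ₗ[k] V) (u : V) (c : k) : Prop :=
  u ≠ 0 ∧ c ≠ 0 ∧ ∀ v : V, T v = v + (c * e v u) • u

/-- `T` is a symplectic transvection with respect to the bilinear form `e`. -/
def IsTransvection {k V : Type*} [Field k] [AddCommGroup V] [Module k V]
    (e : V →ₗ[k] V →ₗ[k] k) (T : V ≃ₗ[k] V) : Prop :=
  ∃ u c, IsTransvectionWith e T u c

/-- the set `L(M) ∩ W` of direction vectors of transvections of `M` lying in `W`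
is nonempty and spans `W`. -/
theorem directions_in_W_span_W
    {ℓ : ℕ} [Fact (Nat.Prime ℓ)] (hℓ : 2 < ℓ)
    {V : Type*} [AddCommGroup V] [Module (ZMod ℓ) V] [FiniteDimensional (ZMod ℓ) V]
    (e : V →ₗ[ZMod ℓ] V →ₗ[ZMod ℓ] ZMod ℓ)
    (halt : ∀ v : V, e v v = 0)
    (hnondeg : ∀ v : V, (∀ w : V, e v w = 0) → v = 0)
    -- `M` is a subgroup of `GSp(V, e)` :
    (M : Subgroup (V ≃ₗ[ZMod ℓ] V))
    (hM : ∀ g ∈ M, ∃ μ : ZMod ℓ, μ ≠ 0 ∧ ∀ x y : V, e (g x) (g y) = μ * e x y)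
    -- `M` contains a symplectic transvection :
    (hTM : ∃ T ∈ M, IsTransvection e T)
    -- `V` is a simple `F_ℓ[M]`-module :
    (hVsimple : ∀ U : Submodule (ZMod ℓ) V, (∀ g ∈ M, ∀ u ∈ U, g u ∈ U) → U = ⊥ ∨ U = ⊤)
    -- `R` is the subgroup of `M` generated by the transvections contained in `M` :
    (R : Subgroup (V ≃ₗ[ZMod ℓ] V))
    (hR : R = Subgroup.closure {T : V ≃ₗ[ZMod ℓ] V | T ∈ M ∧ IsTransvection e T})
    -- `W` is a nonzero `R`-invariant subspace which is a simple `F_ℓ[R]`-module :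
    (W : Submodule (ZMod ℓ) V) (hW0 : W ≠ ⊥)
    (hWinv : ∀ r ∈ R, ∀ w ∈ W, r w ∈ W)
    (hWsimple : ∀ U : Submodule (ZMod ℓ) V, U ≤ W → (∀ r ∈ R, ∀ u ∈ U, r u ∈ U) →
      U = ⊥ ∨ U = W) :
    Submodule.span (ZMod ℓ)
        {u : V | (∃ T ∈ M, ∃ c : ZMod ℓ, IsTransvectionWith e T u c) ∧ u ∈ W} = W ∧
      {u : V | (∃ T ∈ M, ∃ c : ZMod ℓ, IsTransvectionWith e T u c) ∧ u ∈ W}.Nonempty := by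
  have key : ∀ g ∈ M, ∀ u : V, (∃ T ∈ M, ∃ c : ZMod ℓ, IsTransvectionWith e T u c) →
      (∃ T ∈ M, ∃ c : ZMod ℓ, IsTransvectionWith e T (g u) c) := by
    rintro g hg u ⟨T, hT, c, hu, hc, hTv⟩
    obtain ⟨μ, hμ, hgμ⟩ := hM g hg
    refine ⟨g * T * g⁻¹, M.mul_mem (M.mul_mem hg hT) (M.inv_mem hg), c * μ⁻¹, ?_, ?_, ?_⟩
    · simpa using hu
    · exact mul_ne_zero hc (inv_ne_zero hμ)
    · intro v
      obtain ⟨x, rfl⟩ := g.surjective v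
      have h1 : (g * T * g⁻¹) (g x) = g (T x) := by
        change g (T (g.symm (g x))) = _
        rw [g.symm_apply_apply]
      rw [h1, hTv, hgμ, map_add, map_smul]
      congr 2
      field_simp
  have hRM : R ≤ M := by
    rw [hR, Subgroup.closure_le]
    exact fun T hT => hT.1
  have hspan : Submodule.span (ZMod ℓ)
      {u : V | ∃ T ∈ M, ∃ c : ZMod ℓ, IsTransvectionWith e T u c} = ⊤ := by
    refine (hVsimple _ ?_).resolve_left ?_
    · intro g hg u hu
      induction hu using Submodule.span_induction with
      | mem x hx => exact Submodule.subset_span (key g hg x hx)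
      | zero => simp
      | add x y _ _ hx hy => rw [map_add]; exact Submodule.add_mem _ hx hy
      | smul a x _ hx => rw [map_smul]; exact Submodule.smul_mem _ _ hx
    · intro hbot
      obtain ⟨T, hT, u, c, h⟩ := hTM
      rw [Submodule.span_eq_bot] at hbot
      exact h.1 (hbot u ⟨T, hT, c, h⟩)
  have hne : {u : V | (∃ T ∈ M, ∃ c : ZMod ℓ, IsTransvectionWith e T u c) ∧ u ∈ W}.Nonempty := by
    obtain ⟨w, hw, hw0⟩ := Submodule.exists_mem_ne_zero_of_ne_bot hW0
    by_contra hcon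
    apply hw0
    apply hnondeg
    have hle : Submodule.span (ZMod ℓ)
        {u : V | ∃ T ∈ M, ∃ c : ZMod ℓ, IsTransvectionWith e T u c} ≤ LinearMap.ker (e w) := by
      rw [Submodule.span_le]
      rintro u ⟨T, hT, c, h⟩
      rw [SetLike.mem_coe, LinearMap.mem_ker]
      by_contra hwu
      apply hcon
      refine ⟨u, ⟨T, hT, c, h⟩, ?_⟩
      have hTR : T ∈ R := by
        rw [hR]; exact Subgroup.subset_closure ⟨hT, u, c, h⟩
      have h2 := W.sub_mem (hWinv T hTR w hw) hw
      rw [h.2.2 w, add_sub_cancel_left] at h2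
      exact (W.smul_mem_iff (mul_ne_zero h.2.1 hwu)).1 h2
    intro v
    have hv : v ∈ LinearMap.ker (e w) := hle (by rw [hspan]; trivial)
    exact hv
  refine ⟨(hWsimple _ ?_ ?_).resolve_left ?_, hne⟩
  · rw [Submodule.span_le]
    exact fun u hu => hu.2
  · intro g hg u hu
    induction hu using Submodule.span_induction with
    | mem x hx => exact Submodule.subset_span ⟨key g (hRM hg) x hx.1, hWinv g hg x hx.2⟩
    | zero => simp
    | add x y _ _ hx hy => rw [map_add]; exact Submodule.add_mem _ hx hy
    | smul a x _ hx => rw [map_smul]; exact Submodule.smul_mem _ _ hx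
  · intro hbot
    obtain ⟨u, hu⟩ := hne
    rw [Submodule.span_eq_bot] at hbot
    obtain ⟨T, hT, c, h⟩ := hu.1
    exact h.1 (hbot u hu)
end

section
/- The restriction of the symplectic form e to W × W is nondegenerate; that is, W is a nonzero symplectic subspace of (V, e). -/
/-- the restriction of the symplectic form `e` to `W × W` is nondegenerate,
i.e. `W` is a nonzero symplectic subspace of `(V, e)`. -/
theorem restriction_to_W_nondegenerate
    {ℓ : ℕ} [Fact (Nat.Prime ℓ)] (hℓ : 2 < ℓ)
    {V : Type*} [AddCommGroup V] [Module (ZMod ℓ) V] [FiniteDimensional (ZMod ℓ) V]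
    (e : V →ₗ[ZMod ℓ] V →ₗ[ZMod ℓ] ZMod ℓ)
    (halt : ∀ v : V, e v v = 0)
    (hnondeg : ∀ v : V, (∀ w : V, e v w = 0) → v = 0)
    -- `M` is a subgroup of `GSp(V, e)` :
    (M : Subgroup (V ≃ₗ[ZMod ℓ] V))
    (hM : ∀ g ∈ M, ∃ μ : ZMod ℓ, μ ≠ 0 ∧ ∀ x y : V, e (g x) (g y) = μ * e x y)
    -- `M` contains a symplectic transvection :
    (hTM : ∃ T ∈ M, IsTransvection e T)
    -- `V` is a simple `F_ℓ[M]`-module :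
    (hVsimple : ∀ U : Submodule (ZMod ℓ) V, (∀ g ∈ M, ∀ u ∈ U, g u ∈ U) → U = ⊥ ∨ U = ⊤)
    -- `R` is the subgroup of `M` generated by the transvections contained in `M` :
    (R : Subgroup (V ≃ₗ[ZMod ℓ] V))
    (hR : R = Subgroup.closure {T : V ≃ₗ[ZMod ℓ] V | T ∈ M ∧ IsTransvection e T})
    -- `W` is a nonzero `R`-invariant subspace which is a simple `F_ℓ[R]`-module :
    (W : Submodule (ZMod ℓ) V) (hW0 : W ≠ ⊥)
    (hWinv : ∀ r ∈ R, ∀ w ∈ W, r w ∈ W)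
    (hWsimple : ∀ U : Submodule (ZMod ℓ) V, U ≤ W → (∀ r ∈ R, ∀ u ∈ U, r u ∈ U) →
      U = ⊥ ∨ U = W) :
    W ≠ ⊥ ∧ ∀ w ∈ W, (∀ w' ∈ W, e w w' = 0) → w = 0 := by
  refine ⟨hW0, ?_⟩
  have hRM : ∀ r ∈ R, r ∈ M := by
    intro r hr
    rw [hR] at hr
    exact (Subgroup.closure_le M).2 (fun T hT => hT.1) hr
  let U : Submodule (ZMod ℓ) V :=
    { carrier := {w | w ∈ W ∧ ∀ w' ∈ W, e w w' = 0}
      zero_mem' := ⟨W.zero_mem, fun w' _ => by simp⟩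
      add_mem' := fun {a b} ha hb => ⟨W.add_mem ha.1 hb.1, fun w' hw' => by
        simp [ha.2 w' hw', hb.2 w' hw']⟩
      smul_mem' := fun c a ha => ⟨W.smul_mem c ha.1, fun w' hw' => by
        simp [ha.2 w' hw']⟩ }
  have hU : U = ⊥ ∨ U = W := by
    refine hWsimple U (fun w hw => hw.1) ?_
    intro r hr w hw
    refine ⟨hWinv r hr w hw.1, fun w' hw' => ?_⟩
    obtain ⟨μ, -, h⟩ := hM r (hRM r hr)
    have h1 : r (r⁻¹ w') = w' := by
      rw [← LinearEquiv.mul_apply, mul_inv_cancel]; rfl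
    have h2 := h w (r⁻¹ w')
    rw [h1, hw.2 _ (hWinv _ (R.inv_mem hr) _ hw'), mul_zero] at h2
    exact h2
  rcases hU with hU | hU
  · intro w hw h
    have : w ∈ U := ⟨hw, h⟩
    rw [hU] at this
    simpa using this
  exfalso
  have hiso : ∀ w ∈ W, ∀ w' ∈ W, e w w' = 0 := by
    intro w hw
    rw [← hU] at hw
    exact hw.2
  have horth : ∀ T ∈ M, ∀ u c, IsTransvectionWith e T u c → ∀ w ∈ W, e w u = 0 := by
    intro T hT u c hu w hw
    by_contra hne
    have hTR : T ∈ R := by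
      rw [hR]; exact Subgroup.subset_closure ⟨hT, u, c, hu⟩
    have h1 := W.sub_mem (hWinv T hTR w hw) hw
    rw [hu.2.2 w, add_sub_cancel_left] at h1
    have h2 := (W.smul_mem_iff (mul_ne_zero hu.2.1 hne)).1 h1
    exact hne (hiso w hw u h2)
  let S : Set V := {u | ∃ T ∈ M, ∃ c, IsTransvectionWith e T u c}
  have hS : Submodule.span (ZMod ℓ) S = ⊤ := by
    refine (hVsimple (Submodule.span (ZMod ℓ) S) ?_).resolve_left ?_
    · intro g hg u hu
      have hle : Submodule.span (ZMod ℓ) S ≤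
          (Submodule.span (ZMod ℓ) S).comap (g : V →ₗ[ZMod ℓ] V) := by
        rw [Submodule.span_le]
        rintro u ⟨T, hT, c, hu0, hc, hTu⟩
        obtain ⟨μ, hμ, h⟩ := hM g hg
        refine Submodule.subset_span ⟨g * T * g⁻¹,
          M.mul_mem (M.mul_mem hg hT) (M.inv_mem hg), c / μ, ?_, div_ne_zero hc hμ, ?_⟩
        · simpa using hu0
        · intro v
          have h1 : g (g⁻¹ v) = v := by
            rw [← LinearEquiv.mul_apply, mul_inv_cancel]; rfl
          have h2 := h (g⁻¹ v) u
          rw [h1] at h2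
          rw [LinearEquiv.mul_apply, LinearEquiv.mul_apply, hTu, map_add, map_smul, h1]
          simp only [LinearEquiv.coe_coe]
          rw [h2]
          congr 2
          field_simp
      exact hle hu
    · intro hbot
      obtain ⟨T, hT, u, c, hu⟩ := hTM
      have : u ∈ Submodule.span (ZMod ℓ) S := Submodule.subset_span ⟨T, hT, c, hu⟩
      rw [hbot] at this
      exact hu.1 (by simpa using this)
  apply hW0
  rw [Submodule.eq_bot_iff]
  intro w hw
  apply hnondeg
  intro v
  have hle : Submodule.span (ZMod ℓ) S ≤ LinearMap.ker (e w) := by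
    rw [Submodule.span_le]
    rintro u ⟨T, hT, c, hu⟩
    exact horth T hT u c hu w hw
  rw [hS] at hle
  exact hle (Submodule.mem_top (x := v))
end

section
/- Let R_W be the subgroup of M generated by the symplectic transvections contained in M that do not act as the identity on W. Then W is a simple F_ℓ[R_W]-module, i.e. the only R_W-invariant subspaces of W are 0 and W. -/
/-- `W` is a simple module under the subgroup `R_W` of `M` generated by the
symplectic transvections contained in `M` that do not act as the identity on `W`. -/
theorem W_simple_under_RW
    {ℓ : ℕ} [Fact (Nat.Prime ℓ)] (hℓ : 2 < ℓ)
    {V : Type*} [AddCommGroup V] [Module (ZMod ℓ) V] [FiniteDimensional (ZMod ℓ) V]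
    (e : V →ₗ[ZMod ℓ] V →ₗ[ZMod ℓ] ZMod ℓ)
    (halt : ∀ v : V, e v v = 0)
    (hnondeg : ∀ v : V, (∀ w : V, e v w = 0) → v = 0)
    -- `M` is a subgroup of `GSp(V, e)` :
    (M : Subgroup (V ≃ₗ[ZMod ℓ] V))
    (hM : ∀ g ∈ M, ∃ μ : ZMod ℓ, μ ≠ 0 ∧ ∀ x y : V, e (g x) (g y) = μ * e x y)
    -- `M` contains a symplectic transvection :
    (hTM : ∃ T ∈ M, IsTransvection e T)
    -- `V` is a simple `F_ℓ[M]`-module :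
    (hVsimple : ∀ U : Submodule (ZMod ℓ) V, (∀ g ∈ M, ∀ u ∈ U, g u ∈ U) → U = ⊥ ∨ U = ⊤)
    -- `R` is the subgroup of `M` generated by the transvections contained in `M` :
    (R : Subgroup (V ≃ₗ[ZMod ℓ] V))
    (hR : R = Subgroup.closure {T : V ≃ₗ[ZMod ℓ] V | T ∈ M ∧ IsTransvection e T})
    -- `W` is a nonzero `R`-invariant subspace which is a simple `F_ℓ[R]`-module :
    (W : Submodule (ZMod ℓ) V) (hW0 : W ≠ ⊥)
    (hWinv : ∀ r ∈ R, ∀ w ∈ W, r w ∈ W)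
    (hWsimple : ∀ U : Submodule (ZMod ℓ) V, U ≤ W → (∀ r ∈ R, ∀ u ∈ U, r u ∈ U) →
      U = ⊥ ∨ U = W) :
    ∀ U : Submodule (ZMod ℓ) V, U ≤ W →
      (∀ r ∈ Subgroup.closure {T : V ≃ₗ[ZMod ℓ] V | T ∈ M ∧ IsTransvection e T ∧
          ∃ x ∈ W, T x ≠ x}, ∀ u ∈ U, r u ∈ U) →
      U = ⊥ ∨ U = W := by
  intro U hU hinv
  refine hWsimple U hU ?_
  have hle : Subgroup.closure {T : V ≃ₗ[ZMod ℓ] V | T ∈ M ∧ IsTransvection e T ∧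
          ∃ x ∈ W, T x ≠ x} ≤ R := by
    rw [hR]
    exact Subgroup.closure_mono fun T hT => ⟨hT.1, hT.2.1⟩
  have key : ∀ r ∈ R, ∃ s ∈ Subgroup.closure {T : V ≃ₗ[ZMod ℓ] V | T ∈ M ∧
      IsTransvection e T ∧ ∃ x ∈ W, T x ≠ x}, ∀ w ∈ W, r w = s w := by
    intro r hr
    rw [hR] at hr
    induction hr using Subgroup.closure_induction with
    | mem T hT =>
      by_cases h : ∃ x ∈ W, T x ≠ x
      · exact ⟨T, Subgroup.subset_closure ⟨hT.1, hT.2, h⟩, fun _ _ => rfl⟩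
      · push Not at h
        exact ⟨1, one_mem _, fun w hw => h w hw⟩
    | one => exact ⟨1, one_mem _, fun _ _ => rfl⟩
    | mul a b _ _ ha hb =>
      obtain ⟨s, hs, hsa⟩ := ha
      obtain ⟨t, ht, htb⟩ := hb
      refine ⟨s * t, mul_mem hs ht, fun w hw => ?_⟩
      rw [LinearEquiv.mul_apply, LinearEquiv.mul_apply, htb w hw,
        hsa _ (hWinv t (hle ht) w hw)]
    | inv a _ ha =>
      obtain ⟨s, hs, hsa⟩ := ha
      refine ⟨s⁻¹, inv_mem hs, fun w hw => ?_⟩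
      have h1 := hsa _ (hWinv s⁻¹ (hle (inv_mem hs)) w hw)
      rw [← LinearEquiv.mul_apply s, mul_inv_cancel] at h1
      apply a.injective
      rw [h1, ← LinearEquiv.mul_apply a, mul_inv_cancel]
  intro r hr u hu
  obtain ⟨s, hs, hrs⟩ := key r hr
  rw [hrs u (hU hu)]
  exact hinv s hs u hu
end

section
/- Let p be a prime, E a finite field of characteristic p with |E| = p^d elements, and Ω an algebraically closed field of characteristic p. Then for every group homomorphism χ : E^× → Ω^× there is exactly one function e from the set Emb(E,Ω) of field embeddings E → Ω to {0, 1, …, p−1} such that e(j) < p−1 for at least one j ∈ Emb(E,Ω) and χ(x) = ∏_{j ∈ Emb(E,Ω)} j(x)^{e(j)} for all x ∈ E^×. -/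
theorem aux_const (p d : ℕ) (hp : 2 ≤ p) : ∑ i : Fin d, (p - 1) * p ^ (i : ℕ) = p ^ d - 1 := by
  obtain ⟨q, rfl⟩ : ∃ q, p = q + 1 := ⟨p - 1, by omega⟩
  have h := geom_sum_mul_add q d
  rw [Fin.sum_univ_eq_sum_range (fun i => (q + 1 - 1) * (q + 1) ^ i) d, ← Finset.mul_sum,
    Nat.add_sub_cancel, mul_comm]
  omega

theorem aux_inj (p d : ℕ) (hp : 2 ≤ p) (f g : Fin d → ℕ) (hf : ∀ i, f i ≤ p - 1)
    (hg : ∀ i, g i ≤ p - 1) (h : ∑ i, f i * p ^ (i : ℕ) = ∑ i, g i * p ^ (i : ℕ)) : f = g := by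
  let F : Fin d → Fin p := fun i => ⟨f i, by have := hf i; omega⟩
  let G : Fin d → Fin p := fun i => ⟨g i, by have := hg i; omega⟩
  have : F = G := by
    apply finFunctionFinEquiv.injective
    apply Fin.ext
    rw [finFunctionFinEquiv_apply, finFunctionFinEquiv_apply]
    exact h
  funext i
  exact congrArg Fin.val (congrFun this i)

theorem aux_lt (p d : ℕ) (hp : 2 ≤ p) (f : Fin d → ℕ) (hf : ∀ i, f i ≤ p - 1)
    (h : ∃ i, f i < p - 1) : ∑ i, f i * p ^ (i : ℕ) < p ^ d - 1 := by
  rw [← aux_const p d hp]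
  obtain ⟨i, hi⟩ := h
  apply Finset.sum_lt_sum
  · intro i _
    exact Nat.mul_le_mul_right _ (hf i)
  · exact ⟨i, Finset.mem_univ _, Nat.mul_lt_mul_of_pos_right hi (by positivity)⟩

theorem aux_exists (p d : ℕ) (hp : 2 ≤ p) (n : ℕ) (hn : n < p ^ d - 1) :
    ∃ f : Fin d → ℕ, (∀ i, f i ≤ p - 1) ∧ (∃ i, f i < p - 1) ∧ ∑ i, f i * p ^ (i : ℕ) = n := by
  let F : Fin d → Fin p := finFunctionFinEquiv.symm ⟨n, by omega⟩
  have hF : ∑ i, (F i : ℕ) * p ^ (i : ℕ) = n := by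
    rw [← finFunctionFinEquiv_apply]
    simp [F]
  refine ⟨fun i => F i, fun i => Nat.le_sub_one_of_lt (F i).2, ?_, hF⟩
  by_contra! hc
  have : ∑ i, (F i : ℕ) * p ^ (i : ℕ) = p ^ d - 1 := by
    rw [← aux_const p d hp]
    refine Finset.sum_congr rfl fun i _ => ?_
    have h1 := hc i
    have h2 := (F i).2
    congr 1
    omega
  omega

theorem aux_emb (p : ℕ) (hp : p.Prime) (E : Type*) [Field E] [Fintype E] [CharP E p]
    (d : ℕ) (hcard : Fintype.card E = p ^ d)
    (Ω : Type*) [Field Ω] [IsAlgClosed Ω] [CharP Ω p] :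
    ∃ (j₀ : E →+* Ω) (σ : Fin d ≃ (E →+* Ω)), ∀ i x, σ i x = j₀ x ^ (p ^ (i : ℕ)) := by
  haveI : Fact p.Prime := ⟨hp⟩
  letI : Algebra (ZMod p) E := ZMod.algebra E p
  letI : Algebra (ZMod p) Ω := ZMod.algebra Ω p
  have hd : Module.finrank (ZMod p) E = d := by
    have := FiniteField.pow_finrank_eq_card p E
    rw [hcard] at this
    exact Nat.pow_right_injective hp.two_le this
  subst hd
  let j₀ : E →ₐ[ZMod p] Ω := IsAlgClosed.lift
  let s : Fin (Module.finrank (ZMod p) E) → (E →ₐ[ZMod p] Ω) :=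
    fun n => j₀.comp (FiniteField.frobeniusAlgHom (ZMod p) E ^ n.1)
  have hs : Function.Bijective s := by
    rw [Fintype.bijective_iff_injective_and_card]
    refine ⟨fun a b h => ?_, by rw [AlgHom.card, Fintype.card_fin]⟩
    apply (FiniteField.bijective_frobeniusAlgHom_pow (ZMod p) E).1
    ext x
    exact j₀.injective (DFunLike.congr_fun h x)
  let t : (E →ₐ[ZMod p] Ω) → (E →+* Ω) := fun f => f
  have ht : Function.Bijective t := by
    refine ⟨fun a b h => AlgHom.coe_ringHom_injective h, fun f => ?_⟩
    have hc : f.comp (algebraMap (ZMod p) E) = algebraMap (ZMod p) Ω := Subsingleton.elim _ _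
    exact ⟨{ f with commutes' := fun r => DFunLike.congr_fun hc r }, rfl⟩
  refine ⟨j₀, Equiv.ofBijective _ (ht.comp hs), fun i x => ?_⟩
  change j₀ ((FiniteField.frobeniusAlgHom (ZMod p) E ^ i.1) x) = j₀ x ^ _
  rw [AlgHom.coe_pow, FiniteField.coe_frobeniusAlgHom, pow_iterate, ZMod.card, map_pow]

/-- let `E` be a finite field with `p^d` elements and `Ω` an algebraically
closed field of characteristic `p`. Every group homomorphism `χ : Eˣ → Ωˣ` can be written
uniquely as `χ(x) = ∏_{j ∈ Emb(E,Ω)} j(x)^{e(j)}` with exponents `e(j) ∈ {0, …, p−1}` such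
that `e(j) < p−1` for at least one embedding `j`. -/
theorem character_of_finite_field_unique_expansion
    (p : ℕ)(hp : p.Prime) (E : Type*) [Field E] [Fintype E] [CharP E p]
    (d : ℕ) (hcard : Fintype.card E = p ^ d)
    (Ω : Type*) [Field Ω] [IsAlgClosed Ω] [CharP Ω p]
    (χ : Eˣ →* Ωˣ) :
    ∃! ε : (E →+* Ω) → ℕ,
      (∀ j : E →+* Ω, ε j ≤ p - 1) ∧
      (∃ j : E →+* Ω, ε j < p - 1) ∧
      (∀ x : Eˣ, (χ x : Ω) = ∏ᶠ j : E →+* Ω, (j (x : E)) ^ ε j) := by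
  have h2 := hp.two_le
  obtain ⟨j₀, σ, hσ⟩ := aux_emb p hp E d hcard Ω
  have hprod : ∀ (ε : (E →+* Ω) → ℕ) (x : E),
      ∏ᶠ j : E →+* Ω, (j x) ^ ε j = j₀ x ^ (∑ i, ε (σ i) * p ^ (i : ℕ)) := by
    intro ε x
    rw [← finprod_eq_of_bijective (f := fun i => (σ i x) ^ ε (σ i)) σ σ.bijective
      (fun _ => rfl), finprod_eq_prod_of_fintype, ← Finset.prod_pow_eq_pow_sum]
    refine Finset.prod_congr rfl fun i _ => ?_
    rw [hσ, ← pow_mul, mul_comm]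
  obtain ⟨g, hg⟩ := IsCyclic.exists_generator (α := Eˣ)
  classical
  have hN : Fintype.card Eˣ = p ^ d - 1 := by
    rw [Fintype.card_units, hcard]
  have hord : orderOf g = p ^ d - 1 := by
    rw [orderOf_eq_card_of_forall_mem_zpowers hg, Nat.card_eq_fintype_card, hN]
  have hprim : IsPrimitiveRoot (j₀ (g : E)) (p ^ d - 1) := by
    have h := IsPrimitiveRoot.orderOf g
    rw [hord] at h
    exact (IsPrimitiveRoot.coe_units_iff.mpr h).map_of_injective j₀.injective
  haveI : NeZero (p ^ d - 1) := ⟨by rw [← hN]; exact Fintype.card_ne_zero⟩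
  obtain ⟨n, hn, hgn⟩ := hprim.eq_pow_of_pow_eq_one (ξ := (χ g : Ω)) (by
    rw [← Units.val_pow_eq_pow_val, ← map_pow, ← hord, pow_orderOf_eq_one, map_one, Units.val_one])
  have hχ : ∀ x : Eˣ, (χ x : Ω) = j₀ (x : E) ^ n := by
    intro x
    obtain ⟨k, rfl⟩ := (mem_powers_iff_mem_zpowers (x := g)).mpr (hg x)
    simp only [map_pow, Units.val_pow_eq_pow_val, ← hgn]
    rw [← pow_mul, ← pow_mul, mul_comm]
  obtain ⟨f, hf1, ⟨i, hi⟩, hf3⟩ := aux_exists p d h2 n hn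
  refine ⟨fun j => f (σ.symm j), ⟨fun j => hf1 _, ⟨σ i, by simpa using hi⟩, fun x => ?_⟩, ?_⟩
  · rw [hprod, hχ]
    simp [hf3]
  · rintro ε ⟨h1, ⟨j, hj⟩, h3⟩
    have hlt := aux_lt p d h2 (fun i => ε (σ i)) (fun i => h1 _) ⟨σ.symm j, by simpa using hj⟩
    have heq := h3 g
    rw [hprod, ← hgn] at heq
    have he := hprim.pow_inj hn hlt heq
    have hfe := aux_inj p d h2 f (fun i => ε (σ i)) hf1 (fun i => h1 _) (hf3.trans he)
    funext j
    simp [hfe]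
end
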